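/- Let G = ℤ/4 and let s : ℤ/4 → ℤ/2 be the reduction homomorphism. Define ψ₀ : G × G → ℂˣ by ψ₀(a, b) = -1 if a' + b' ≥ 4 and ψ₀(a, b) = 1 otherwise, where a', b' ∈ {0, 1, 2, 3} denote the integer representatives of a, b ∈ ℤ/4. Then: ψ₀ is a twisted 2-cocycle with respect to s; ψ₀ is not a twisted 2-coboundary; and every twisted 2-cocycle on G with respect to s is cohomologous to the constant function 1 or to ψ₀. (Equivalently, the twisted cohomology group H²(ℤ₄ᵀ, ℂˣ_T) has exactly two elements, so there are exactly two ℤ₄ᵀ-SPT phases; ψ₀ is the class with T⁴ = -1 in the twisted group algebra.) -/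

import Mathlib

noncomputable section

/-- Complex conjugation on the group of units `ℂˣ`. -/
def conjUnits : ℂˣ →* ℂˣ := Units.map (starRingEnd ℂ).toMonoidHom

/-- The reduction homomorphism `s : ℤ/4 → ℤ/2`. -/
def s : ZMod 4 → ZMod 2 := ZMod.castHom (show 2 ∣ 4 by norm_num) (ZMod 2)

/-- The twisted action of `g ∈ ℤ/4` on `ℂˣ`: trivial if `s g = 0`, complex conjugation
otherwise. -/
def tAct (g : ZMod 4) (z : ℂˣ) : ℂˣ := if s g = 0 then z else conjUnits z

/-- Twisted 2-cocycle condition on `ℤ/4` with respect to `s`. -/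
def IsTwisted2Cocycle (ψ : ZMod 4 → ZMod 4 → ℂˣ) : Prop :=
  ∀ g₁ g₂ g₃,
    tAct g₁ (ψ g₂ g₃) * ψ g₁ (g₂ + g₃) = ψ (g₁ + g₂) g₃ * ψ g₁ g₂

/-- Twisted 2-coboundary condition on `ℤ/4` with respect to `s`. -/
def IsTwisted2Coboundary (ψ : ZMod 4 → ZMod 4 → ℂˣ) : Prop :=
  ∃ β : ZMod 4 → ℂˣ, ∀ g₁ g₂,
    ψ g₁ g₂ = tAct g₁ (β g₂) * (β (g₁ + g₂))⁻¹ * β g₁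

/-- Two twisted 2-cochains are cohomologous if their pointwise quotient is a twisted
2-coboundary. -/
def Cohomologous (ψ ψ' : ZMod 4 → ZMod 4 → ℂˣ) : Prop :=
  IsTwisted2Coboundary fun g₁ g₂ => ψ g₁ g₂ * (ψ' g₁ g₂)⁻¹

/-- The nontrivial `ℤ₄ᵀ`-SPT cocycle: `ψ₀(a, b) = -1` if the integer representatives
satisfy `a' + b' ≥ 4`, and `1` otherwise. -/
def ψ₀ : ZMod 4 → ZMod 4 → ℂˣ := fun a b =>
  if 4 ≤ a.val + b.val then -1 else 1

theorem tAct_mul (g : ZMod 4) (x y : ℂˣ) : tAct g (x * y) = tAct g x * tAct g y := by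
  unfold tAct; split_ifs <;> simp

theorem tAct_inv (g : ZMod 4) (x : ℂˣ) : tAct g x⁻¹ = (tAct g x)⁻¹ := by
  unfold tAct; split_ifs <;> simp

theorem conj_conj_units (x : ℂˣ) : conjUnits (conjUnits x) = x := by
  ext; simp [conjUnits]

theorem s_eq_zero_iff (g : ZMod 4) : s g = 0 ↔ (g = 0 ∨ g = 2) := by
  revert g; unfold s; decide

theorem s_add_iff (g h : ZMod 4) : s (g + h) = 0 ↔ (s g = 0 ↔ s h = 0) := by
  simp only [s_eq_zero_iff]; revert g h; decide

theorem tAct_add (g h : ZMod 4) (x : ℂˣ) : tAct (g + h) x = tAct g (tAct h x) := by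
  unfold tAct
  by_cases h1 : s g = 0 <;> by_cases h2 : s h = 0 <;>
    simp [s_add_iff, h1, h2, conj_conj_units]

theorem tAct_zero (x : ℂˣ) : tAct 0 x = x := by simp [tAct, s_eq_zero_iff]
theorem tAct_two (x : ℂˣ) : tAct 2 x = x := by simp [tAct, s_eq_zero_iff]
theorem tAct_one (x : ℂˣ) : tAct 1 x = conjUnits x := by
  have : ¬ s 1 = 0 := by rw [s_eq_zero_iff]; decide
  simp [tAct, this]
theorem tAct_three (x : ℂˣ) : tAct 3 x = conjUnits x := by
  have : ¬ s 3 = 0 := by rw [s_eq_zero_iff]; decide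
  simp [tAct, this]

theorem cocycle_div {φ ψ : ZMod 4 → ZMod 4 → ℂˣ} (hφ : IsTwisted2Cocycle φ)
    (hψ : IsTwisted2Cocycle ψ) : IsTwisted2Cocycle fun a b => φ a b * (ψ a b)⁻¹ := by
  intro a b c
  simp only [tAct_mul, tAct_inv]
  calc _ = (tAct a (φ b c) * φ a (b + c)) * (tAct a (ψ b c) * ψ a (b + c))⁻¹ := by
        rw [mul_inv]; exact mul_mul_mul_comm _ _ _ _
    _ = _ := by rw [hφ, hψ, mul_inv]; exact mul_mul_mul_comm _ _ _ _

theorem cocycle_d (β : ZMod 4 → ℂˣ) :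
    IsTwisted2Cocycle fun a b => tAct a (β b) * (β (a + b))⁻¹ * β a := by
  intro a b c
  simp only [tAct_mul, tAct_inv, tAct_add, add_assoc]
  ext
  push_cast
  field_simp

theorem eq_one_of_cocycle {φ : ZMod 4 → ZMod 4 → ℂˣ} (hφ : IsTwisted2Cocycle φ)
    (h : ∀ a, φ a 1 = 1) (a b : ZMod 4) : φ a b = 1 := by
  have step : ∀ b, φ a (b + 1) = φ a b := by
    intro b
    have := hφ a b 1
    have h1 : tAct a 1 = 1 := by unfold tAct; split_ifs <;> simp
    simpa [h, h1] using this
  have h2 : φ a 2 = 1 := (step 1).trans (h a)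
  have h3 : φ a 3 = 1 := (step 2).trans h2
  have h0 : φ a 0 = 1 := (step 3).trans h3
  have hb : b = 0 ∨ b = 1 ∨ b = 2 ∨ b = 3 := by revert b; decide
  rcases hb with rfl | rfl | rfl | rfl
  exacts [h0, h a, h2, h3]

/-- The invariant: the value of `T⁴`. -/
def inv4 (ψ : ZMod 4 → ZMod 4 → ℂˣ) : ℂˣ := ψ 0 1 * ψ 1 1 * ψ 2 1 * ψ 3 1

theorem z4_add : (1 + 1 : ZMod 4) = 2 ∧ (2 + 1 : ZMod 4) = 3 ∧ (3 + 1 : ZMod 4) = 0 ∧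
    (1 + 2 : ZMod 4) = 3 ∧ (1 + 3 : ZMod 4) = 0 := by decide

theorem inv4_real {ψ : ZMod 4 → ZMod 4 → ℂˣ} (h : IsTwisted2Cocycle ψ) :
    conjUnits (inv4 ψ) = inv4 ψ := by
  obtain ⟨e1, e2, e3, e4, e5⟩ := z4_add
  have h0 := h 1 0 1
  have h1 := h 1 1 1
  have h2 := h 1 2 1
  have h3 := h 1 3 1
  simp only [tAct_one, e1, e2, e3, e4, e5, zero_add, add_zero] at h0 h1 h2 h3
  have := congrArg₂ (· * ·) (congrArg₂ (· * ·) h0 h1) (congrArg₂ (· * ·) h2 h3)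
  unfold inv4
  simp only [map_mul]
  apply mul_right_cancel (b := ψ 1 0 * ψ 1 1 * ψ 1 2 * ψ 1 3)
  calc _ = _ := by ac_rfl
    _ = _ := this
    _ = _ := by ac_rfl

theorem coboundary_of_inv4 {φ : ZMod 4 → ZMod 4 → ℂˣ} (h : IsTwisted2Cocycle φ)
    (c : ℂˣ) (hc : conjUnits c = c) (hI : inv4 φ = c ^ 4) : IsTwisted2Coboundary φ := by
  obtain ⟨e1, e2, e3, e4, e5⟩ := z4_add
  let β : ZMod 4 → ℂˣ := fun a =>
    if a = 0 then φ 0 1 else if a = 1 then c else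
      if a = 2 then c * c * (φ 1 1)⁻¹ else c * c * c * (φ 1 1)⁻¹ * (φ 2 1)⁻¹
  have b0 : β 0 = φ 0 1 := rfl
  have b1 : β 1 = c := rfl
  have b2 : β 2 = c * c * (φ 1 1)⁻¹ := rfl
  have b3 : β 3 = c * c * c * (φ 1 1)⁻¹ * (φ 2 1)⁻¹ := rfl
  refine ⟨β, fun a b => ?_⟩
  have key := eq_one_of_cocycle (cocycle_div h (cocycle_d β)) (fun a => ?_) a b
  · exact mul_inv_eq_one.mp key
  · have ha : a = 0 ∨ a = 1 ∨ a = 2 ∨ a = 3 := by revert a; decide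
    rw [mul_inv_eq_one]
    rcases ha with rfl | rfl | rfl | rfl
    · rw [zero_add, tAct_zero]; simp [b0]
    · rw [tAct_one, e1, b1, b2, hc]; ext; push_cast; field_simp
    · rw [tAct_two, e2, b1, b2, b3]; ext; push_cast; field_simp
    · rw [tAct_three, e3, b1, b0, b3, hc]
      have := congrArg Units.val hI
      simp only [inv4, Units.val_mul, Units.val_pow_eq_pow_val] at this
      ext; push_cast; field_simp
      linear_combination this

theorem psi_eq (a b : ZMod 4) : ψ₀ a b =
    Units.map (Int.castRingHom ℂ).toMonoidHom (if 4 ≤ a.val + b.val then -1 else 1) := by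
  unfold ψ₀; split_ifs <;> ext <;> simp

theorem tAct_psi (g a b : ZMod 4) : tAct g (ψ₀ a b) = ψ₀ a b := by
  unfold tAct ψ₀; split_ifs <;> ext <;> simp [conjUnits]

theorem cocycle_psi : IsTwisted2Cocycle ψ₀ := by
  intro a b c
  rw [tAct_psi]
  simp only [psi_eq, ← map_mul]
  congr 1
  revert a b c
  decide

theorem inv4_psi : inv4 ψ₀ = -1 := by
  have h0 : ψ₀ 0 1 = 1 := if_neg (by decide)
  have h1 : ψ₀ 1 1 = 1 := if_neg (by decide)
  have h2 : ψ₀ 2 1 = 1 := if_neg (by decide)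
  have h3 : ψ₀ 3 1 = -1 := if_pos (by decide)
  simp [inv4, h0, h1, h2, h3]

theorem not_coboundary_psi : ¬ IsTwisted2Coboundary ψ₀ := by
  rintro ⟨β, hβ⟩
  obtain ⟨e1, e2, e3, e4, e5⟩ := z4_add
  have h := inv4_psi
  simp only [inv4, hβ, tAct_zero, tAct_one, tAct_two, tAct_three, e1, e2, e3, zero_add] at h
  have h' : (β 1 * conjUnits (β 1)) ^ 2 = -1 := by
    rw [← h]; ext; push_cast; field_simp
  have h2 := congrArg Units.val h'
  have h3 : ((β 1 * conjUnits (β 1) : ℂˣ) : ℂ) = (Complex.normSq (β 1) : ℂ) := by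
    simp [conjUnits, Complex.mul_conj]
  rw [Units.val_pow_eq_pow_val, h3] at h2
  have h4 : (Complex.normSq (β 1)) ^ 2 = -1 := by
    have : ((Complex.normSq (β 1) ^ 2 : ℝ) : ℂ) = ((-1 : ℝ) : ℂ) := by
      push_cast; simpa using h2
    exact_mod_cast this
  nlinarith [sq_nonneg (Complex.normSq (β 1))]

theorem exists_root (u : ℂˣ) (r : ℝ) (hr : 0 < r) (hu : (u : ℂ) = r) :
    ∃ c : ℂˣ, conjUnits c = c ∧ u = c ^ 4 := by
  have hs : 0 < √(√r) := Real.sqrt_pos.mpr (Real.sqrt_pos.mpr hr)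
  refine ⟨Units.mk0 ((√(√r) : ℝ) : ℂ) (by exact_mod_cast hs.ne'), ?_, ?_⟩
  · ext; simp [conjUnits]
  · ext
    have : √(√r) ^ 4 = r := by
      rw [show 4 = 2 * 2 from rfl, pow_mul, Real.sq_sqrt (Real.sqrt_nonneg r),
        Real.sq_sqrt hr.le]
    rw [hu, Units.val_pow_eq_pow_val, Units.val_mk0, ← Complex.ofReal_pow, this]

/-- `H²(ℤ₄ᵀ, ℂˣ_T)` has exactly two elements: `ψ₀` is a twisted 2-cocycle, it is not a
twisted 2-coboundary, and every twisted 2-cocycle on `ℤ/4` is cohomologous to `1` or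
to `ψ₀`. -/
theorem H2_Z4T :
    IsTwisted2Cocycle ψ₀ ∧ ¬ IsTwisted2Coboundary ψ₀ ∧
      ∀ ψ, IsTwisted2Cocycle ψ →
        Cohomologous ψ (fun _ _ => 1) ∨ Cohomologous ψ ψ₀ := by
  refine ⟨cocycle_psi, not_coboundary_psi, fun ψ hψ => ?_⟩
  have hreal := congrArg Units.val (inv4_real hψ)
  have hreal' : (starRingEnd ℂ) (inv4 ψ : ℂ) = inv4 ψ := hreal
  obtain ⟨r, hr⟩ := Complex.conj_eq_iff_real.mp hreal'
  have hr0 : r ≠ 0 := by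
    rintro rfl
    exact (inv4 ψ).ne_zero (by simpa using hr)
  rcases lt_or_gt_of_ne hr0 with hneg | hpos
  · right
    have hI : inv4 (fun a b => ψ a b * (ψ₀ a b)⁻¹) = - inv4 ψ := by
      have h1 : inv4 (fun a b => ψ a b * (ψ₀ a b)⁻¹) = inv4 ψ * (inv4 ψ₀)⁻¹ := by
        simp only [inv4, mul_inv]; ac_rfl
      rw [h1, inv4_psi]; simp
    obtain ⟨c, hc, hc4⟩ := exists_root (- inv4 ψ) (-r) (by linarith) (by simp [hr])
    exact coboundary_of_inv4 (cocycle_div hψ cocycle_psi) c hc (hI.trans hc4)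
  · left
    obtain ⟨c, hc, hc4⟩ := exists_root (inv4 ψ) r hpos hr
    have := coboundary_of_inv4 hψ c hc hc4
    simpa [Cohomologous] using this

end
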